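/- arXiv:1403.4123 — 5 statements merged into one kernel-verified Lean document; each statement's English description precedes it below -/
import Mathlib

section
/- Let n ≥ 2 and let μ₁, …, μₙ be real numbers with ∑ᵢ μᵢ = 0. Set B = ∑ᵢ μᵢ². Then |∑ᵢ μᵢ³| ≤ ((n−2)/√(n(n−1))) · B^{3/2}. -/
open Finset

lemma third_moment_aux (n : ℕ) (hn : 2 ≤ n) (x : Fin n → ℝ)
    (hsum : ∑ i, x i = 0) (B c : ℝ) (hB : B = ∑ i, (x i) ^ 2) (hc : 0 ≤ c)
    (hcB : (n : ℝ) * ((n : ℝ) - 1) * c ^ 2 = B) :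
    ∑ i, (x i) ^ 3 ≤ ((n : ℝ) - 2) * c * B := by
  have hn' : (2 : ℝ) ≤ n := by exact_mod_cast hn
  have hle : ∀ i, x i ≤ ((n : ℝ) - 1) * c := by
    intro i
    have h1 := sq_sum_le_card_mul_sum_sq (s := univ.erase i) (f := x)
    have h2 := Finset.add_sum_erase univ x (mem_univ i)
    have h3 := Finset.add_sum_erase univ (fun j => x j ^ 2) (mem_univ i)
    have h4 : ((univ.erase i).card : ℝ) = (n : ℝ) - 1 := by
      rw [card_erase_of_mem (mem_univ i), card_univ, Fintype.card_fin]
      push_cast [Nat.cast_sub (show 1 ≤ n by omega)]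
      rfl
    rw [h4] at h1
    rw [hsum] at h2
    rw [← hB] at h3
    have e1 : ∑ j ∈ univ.erase i, x j = - x i := by linarith
    have e2 : ∑ j ∈ univ.erase i, x j ^ 2 = B - x i ^ 2 := by linarith
    rw [e1, e2] at h1
    have h5 : (n : ℝ) * x i ^ 2 ≤ n * (((n : ℝ) - 1) * c) ^ 2 := by
      have : (n : ℝ) * (((n : ℝ) - 1) * c) ^ 2 = ((n : ℝ) - 1) * B := by rw [← hcB]; ring
      rw [this]; linarith
    have h6 : x i ^ 2 ≤ (((n : ℝ) - 1) * c) ^ 2 := le_of_mul_le_mul_left h5 (by linarith)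
    exact le_trans (le_abs_self _) (abs_le_of_sq_le_sq h6 (mul_nonneg (by linarith) hc))
  have hs : ∑ i, (x i - ((n : ℝ) - 1) * c) * (x i + c) ^ 2 ≤ 0 :=
    Finset.sum_nonpos fun i _ =>
      mul_nonpos_of_nonpos_of_nonneg (by linarith [hle i]) (sq_nonneg _)
  have he : ∑ i, (x i - ((n : ℝ) - 1) * c) * (x i + c) ^ 2
      = ∑ i, x i ^ 3 + (2 * c - ((n : ℝ) - 1) * c) * ∑ i, x i ^ 2
        + (c ^ 2 - 2 * c * (((n : ℝ) - 1) * c)) * ∑ i, x i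
        - n * (((n : ℝ) - 1) * c * c ^ 2) := by
    have : (n : ℝ) * (((n : ℝ) - 1) * c * c ^ 2)
        = ∑ _i : Fin n, (((n : ℝ) - 1) * c * c ^ 2) := by simp
    rw [this, mul_sum, mul_sum, ← sum_add_distrib, ← sum_add_distrib, ← sum_sub_distrib]
    exact sum_congr rfl fun i _ => by ring
  rw [he, hsum, ← hB] at hs
  have : (n : ℝ) * (((n : ℝ) - 1) * c * c ^ 2) = c * B := by rw [← hcB]; ring
  rw [this] at hs
  linarith

/-- Sharp bound on the third moment of a trace-free family of reals:
if `μ₁, …, μₙ` (n ≥ 2) satisfy `∑ᵢ μᵢ = 0` and `B = ∑ᵢ μᵢ²`, then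
`|∑ᵢ μᵢ³| ≤ ((n−2)/√(n(n−1))) · B^{3/2}` (with `B^{3/2} = B·√B`). -/
theorem third_moment_bound (n : ℕ) (hn : 2 ≤ n) (μ : Fin n → ℝ)
    (hsum : ∑ i, μ i = 0) (B : ℝ) (hB : B = ∑ i, (μ i) ^ 2) :
    |∑ i, (μ i) ^ 3| ≤ ((n : ℝ) - 2) / Real.sqrt ((n : ℝ) * ((n : ℝ) - 1)) * (B * Real.sqrt B) := by
  have hn' : (2 : ℝ) ≤ n := by exact_mod_cast hn
  have hB0 : 0 ≤ B := hB ▸ sum_nonneg fun i _ => sq_nonneg _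
  have hp : 0 < (n : ℝ) * ((n : ℝ) - 1) := mul_pos (by linarith) (by linarith)
  have hc : 0 ≤ Real.sqrt B / Real.sqrt ((n : ℝ) * ((n : ℝ) - 1)) := by positivity
  have hcB : (n : ℝ) * ((n : ℝ) - 1)
      * (Real.sqrt B / Real.sqrt ((n : ℝ) * ((n : ℝ) - 1))) ^ 2 = B := by
    rw [div_pow, Real.sq_sqrt hB0, Real.sq_sqrt hp.le, mul_div_cancel₀ _ hp.ne']
  have e : ((n : ℝ) - 2) / Real.sqrt ((n : ℝ) * ((n : ℝ) - 1)) * (B * Real.sqrt B)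
      = ((n : ℝ) - 2) * (Real.sqrt B / Real.sqrt ((n : ℝ) * ((n : ℝ) - 1))) * B := by ring
  rw [e, abs_le']
  refine ⟨third_moment_aux n hn μ hsum B _ hB hc hcB, ?_⟩
  have := third_moment_aux n hn (fun i => - μ i) (by simp [hsum]) B _ (by simpa using hB) hc hcB
  have e3 : ∑ i, (- μ i) ^ 3 = - ∑ i, μ i ^ 3 := by
    rw [← sum_neg_distrib]
    exact sum_congr rfl fun i _ => by ring
  rw [← e3]
  exact this
end

section
/- Let n ≥ 2 and let μ₁, …, μₙ be real numbers with ∑ᵢ μᵢ = 0, and set B = ∑ᵢ μᵢ². Then equality |∑ᵢ μᵢ³| = ((n−2)/√(n(n−1))) · B^{3/2} holds if and only if at least n−1 of the numbers μ₁, …, μₙ are equal, i.e. if and only if there exists an index i₀ such that μⱼ = μₖ for all j, k ≠ i₀. -/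
open Finset

lemma aux_upper (n : ℕ) (hn : 2 ≤ n) (μ : Fin n → ℝ) (hsum : ∑ i, μ i = 0) (t : ℝ) (ht : 0 ≤ t)
    (hB : ∑ i, (μ i) ^ 2 = n * (n - 1) * t ^ 2) (i : Fin n) : μ i ≤ (n - 1) * t := by
  have hn' : (2 : ℝ) ≤ n := by exact_mod_cast hn
  have h1 := Finset.add_sum_erase univ μ (mem_univ i)
  have h2 := Finset.add_sum_erase univ (fun i => μ i ^ 2) (mem_univ i)
  have h3 := sq_sum_le_card_mul_sum_sq (s := univ.erase i) (f := μ)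
  have hc : (((univ.erase i).card : ℕ) : ℝ) = n - 1 := by
    rw [card_erase_of_mem (mem_univ i), card_univ, Fintype.card_fin, Nat.cast_sub (by omega)]
    simp
  rw [hc] at h3
  rw [hsum] at h1
  rw [hB] at h2
  have e1 : ∑ x ∈ univ.erase i, μ x = - μ i := by linarith
  have e2 : ∑ x ∈ univ.erase i, μ x ^ 2 = n * (n - 1) * t ^ 2 - μ i ^ 2 := by linarith
  rw [e1, e2] at h3
  have h4 : (n : ℝ) * (μ i) ^ 2 ≤ n * ((n - 1) * t) ^ 2 := by nlinarith
  have h5 : (μ i) ^ 2 ≤ ((n - 1) * t) ^ 2 := le_of_mul_le_mul_left h4 (by linarith)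
  exact le_of_sq_le_sq h5 (mul_nonneg (by linarith) ht)

lemma aux_eq (n : ℕ) (hn : 2 ≤ n) (μ : Fin n → ℝ) (hsum : ∑ i, μ i = 0) (t : ℝ) (ht : 0 ≤ t)
    (hB : ∑ i, (μ i) ^ 2 = n * (n - 1) * t ^ 2)
    (hC : ∑ i, (μ i) ^ 3 = (n - 2) * t * (n * (n - 1) * t ^ 2)) :
    ∃ i₀ : Fin n, ∀ j k : Fin n, j ≠ i₀ → k ≠ i₀ → μ j = μ k := by
  have hn' : (2 : ℝ) ≤ n := by exact_mod_cast hn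
  have hup := aux_upper n hn μ hsum t ht hB
  have hz : ∑ i, ((n - 1) * t - μ i) * (μ i + t) ^ 2 = 0 := by
    have : ∀ i, ((n - 1) * t - μ i) * (μ i + t) ^ 2 =
        - μ i ^ 3 + (n - 3) * t * μ i ^ 2 + (2 * n - 3) * t ^ 2 * μ i + (n - 1) * t ^ 3 := by
      intro i; ring
    simp only [this, sum_add_distrib, ← mul_sum, sum_neg_distrib, hsum, hB, hC]
    simp
    ring
  rw [sum_eq_zero_iff_of_nonneg
    (fun i _ => mul_nonneg (sub_nonneg.2 (hup i)) (sq_nonneg _))] at hz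
  have hor : ∀ i, μ i = (n - 1) * t ∨ μ i = - t := by
    intro i
    rcases mul_eq_zero.1 (hz i (mem_univ i)) with h | h
    · left; linarith
    · right; have := pow_eq_zero_iff (two_ne_zero) |>.1 h; linarith
  by_cases hex : ∃ i, μ i = (n - 1) * t
  · obtain ⟨i, hi⟩ := hex
    have key : ∀ j, j ≠ i → μ j = - t := by
      intro j hj
      rcases hor j with h | h
      · have hs : ∑ k, (μ k + t) = n * t := by
          simp [sum_add_distrib, hsum]
        have hnn : ∀ k, 0 ≤ μ k + t := by
          intro k
          rcases hor k with h | h <;> rw [h] <;> nlinarith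
        have h2 : ∑ k ∈ {i, j}, (μ k + t) ≤ ∑ k, (μ k + t) :=
          sum_le_sum_of_subset_of_nonneg (subset_univ _) (fun k _ _ => hnn k)
        rw [sum_pair hj.symm, hs, hi, h] at h2
        have : t = 0 := by nlinarith
        rw [h, this]; simp
      · exact h
    exact ⟨i, fun j k hj hk => by rw [key j hj, key k hk]⟩
  · push Not at hex
    have key : ∀ j, μ j = - t := fun j => (hor j).resolve_left (hex j)
    exact ⟨⟨0, by omega⟩, fun j k _ _ => by rw [key j, key k]⟩

/-- Equality case in the sharp third-moment bound: for `μ₁, …, μₙ` (n ≥ 2) with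
`∑ᵢ μᵢ = 0` and `B = ∑ᵢ μᵢ²`, equality `|∑ᵢ μᵢ³| = ((n−2)/√(n(n−1))) · B^{3/2}`
holds if and only if at least `n−1` of the `μᵢ` are equal, i.e. there is an index
`i₀` with `μⱼ = μₖ` for all `j, k ≠ i₀`. -/
theorem third_moment_bound_equality_iff (n : ℕ) (hn : 2 ≤ n) (μ : Fin n → ℝ)
    (hsum : ∑ i, μ i = 0) (B : ℝ) (hB : B = ∑ i, (μ i) ^ 2) :
    |∑ i, (μ i) ^ 3| = ((n : ℝ) - 2) / Real.sqrt ((n : ℝ) * ((n : ℝ) - 1)) * (B * Real.sqrt B)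
      ↔ ∃ i₀ : Fin n, ∀ j k : Fin n, j ≠ i₀ → k ≠ i₀ → μ j = μ k := by
  have hn' : (2 : ℝ) ≤ n := by exact_mod_cast hn
  have hB0 : 0 ≤ B := by rw [hB]; positivity
  have hr0 : (0 : ℝ) < n * (n - 1) := by nlinarith
  have hr : 0 < Real.sqrt ((n : ℝ) * (n - 1)) := Real.sqrt_pos.2 hr0
  have hrs := Real.sq_sqrt hr0.le
  obtain ⟨t, htd⟩ : ∃ t, t = Real.sqrt B / Real.sqrt ((n : ℝ) * (n - 1)) := ⟨_, rfl⟩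
  have ht : 0 ≤ t := by rw [htd]; positivity
  have htB : B = n * (n - 1) * t ^ 2 := by
    rw [htd, div_pow, hrs, Real.sq_sqrt hB0, mul_div_cancel₀ _ hr0.ne']
  have hR : ((n : ℝ) - 2) / Real.sqrt ((n : ℝ) * ((n : ℝ) - 1)) * (B * Real.sqrt B)
      = (n - 2) * t * (n * (n - 1) * t ^ 2) := by
    rw [← htB, htd]; ring
  rw [hR]
  have hB' : ∑ i, (μ i) ^ 2 = n * (n - 1) * t ^ 2 := by rw [← hB, htB]
  constructor
  · intro h
    rcases abs_choice (∑ i, (μ i) ^ 3) with h1 | h1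
    · rw [h1] at h
      exact aux_eq n hn μ hsum t ht hB' h
    · rw [h1] at h
      obtain ⟨i, hi⟩ := aux_eq n hn (fun i => - μ i) (by simp [hsum]) t ht (by simpa using hB')
        (by rw [← h, ← sum_neg_distrib]; exact sum_congr rfl fun i _ => by ring)
      exact ⟨i, fun j k hj hk => neg_injective (hi j k hj hk)⟩
  · rintro ⟨i, hi⟩
    obtain ⟨c, hc⟩ : ∃ c, ∀ j, j ≠ i → μ j = c := by
      have : Nontrivial (Fin n) := Fin.nontrivial_iff_two_le.2 hn
      obtain ⟨k, hk⟩ := exists_ne i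
      exact ⟨μ k, fun j hj => hi j k hj hk⟩
    have hcard : (((univ.erase i).card : ℕ) : ℝ) = n - 1 := by
      rw [card_erase_of_mem (mem_univ i), card_univ, Fintype.card_fin, Nat.cast_sub (by omega)]
      simp
    have hs : ∀ m : ℕ, ∑ j, μ j ^ m = μ i ^ m + (n - 1) * c ^ m := by
      intro m
      rw [← Finset.add_sum_erase univ (fun i => μ i ^ m) (mem_univ i),
        sum_congr rfl (fun j hj => by rw [hc j (ne_of_mem_erase hj)]), sum_const, nsmul_eq_mul,
        hcard]
    have h1 := hs 1
    simp only [pow_one, hsum] at h1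
    have hi' : μ i = - ((n - 1) * c) := by linarith
    have h2 := hs 2
    rw [hB', hi'] at h2
    have h3 : (n * (n - 1) : ℝ) * t ^ 2 = n * (n - 1) * c ^ 2 := by rw [h2]; ring
    have h4 : t ^ 2 = c ^ 2 := mul_left_cancel₀ hr0.ne' h3
    have h5 : t = |c| := by rw [← abs_of_nonneg ht]; exact (sq_eq_sq_iff_abs_eq_abs _ _).1 h4
    rw [hs 3, hi']
    have h6 : (-((n - 1) * c)) ^ 3 + (n - 1) * c ^ 3 = -(((n : ℝ) - 2) * (n * (n - 1)) * c ^ 3) := by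
      ring
    rw [h6, abs_neg, abs_mul, abs_pow, ← h5,
      abs_of_nonneg (mul_nonneg (by linarith) hr0.le)]
    ring
end

section
/- Let n ≥ 1 and let h : Fin n → Fin n → Fin n → ℝ be totally symmetric (invariant under every permutation of its three indices). Then ∑_{i,j,k} h_{ijk}² − (1/n) ∑_k (∑_i h_{iik})² ≥ 2 ∑_{i ≠ k} h_{iik}² + ∑_{i,j,k pairwise distinct} h_{ijk}² ≥ 0. -/
open Finset

/-- For a totally symmetric three-index array `h`,
`∑_{i,j,k} h_{ijk}² − (1/n) ∑_k (∑_i h_{iik})² ≥ 2 ∑_{i≠k} h_{iik}²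
  + ∑_{i,j,k pairwise distinct} h_{ijk}² ≥ 0`. -/
theorem sum_sq_sub_grad_H_bound (n : ℕ) (hn : 1 ≤ n) (h : Fin n → Fin n → Fin n → ℝ)
    (hsym1 : ∀ i j k, h i j k = h j i k) (hsym2 : ∀ i j k, h i j k = h i k j) :
    ((∑ i, ∑ j, ∑ k, (h i j k) ^ 2) - (1 / (n : ℝ)) * ∑ k, (∑ i, h i i k) ^ 2
      ≥ 2 * (∑ i, ∑ k, if i ≠ k then (h i i k) ^ 2 else 0)
        + ∑ i, ∑ j, ∑ k, if i ≠ j ∧ j ≠ k ∧ i ≠ k then (h i j k) ^ 2 else 0)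
    ∧ (2 * (∑ i, ∑ k, if i ≠ k then (h i i k) ^ 2 else 0)
        + (∑ i, ∑ j, ∑ k, if i ≠ j ∧ j ≠ k ∧ i ≠ k then (h i j k) ^ 2 else 0) ≥ 0) := by
  have key : (∑ i, ∑ j, ∑ k, (h i j k) ^ 2) = (∑ k, ∑ i, (h i i k) ^ 2)
      + 2 * (∑ i, ∑ k, if i ≠ k then (h i i k) ^ 2 else 0)
      + ∑ i, ∑ j, ∑ k, if i ≠ j ∧ j ≠ k ∧ i ≠ k then (h i j k) ^ 2 else 0 := by
    have pt : ∀ i j k, (h i j k) ^ 2 = (if i = j then (h i i k) ^ 2 else 0)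
        + (if j = k then (if i ≠ j then (h j j i) ^ 2 else 0) else 0)
        + (if i = k then (if i ≠ j then (h i i j) ^ 2 else 0) else 0)
        + (if i ≠ j ∧ j ≠ k ∧ i ≠ k then (h i j k) ^ 2 else 0) := by
      intro i j k
      by_cases h1 : i = j
      · subst h1
        simp
      · by_cases h2 : j = k
        · subst h2
          simp [h1, hsym1 i j j, hsym2 j i j]
        · by_cases h3 : i = k
          · subst h3
            simp [h1, h2, hsym2 i j i]
          · simp [h1, h2, h3]
    have e1 : (∑ i, ∑ j, ∑ k, if i = j then (h i i k) ^ 2 else 0)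
        = ∑ k, ∑ i, (h i i k) ^ 2 := by
      rw [Finset.sum_comm (f := fun k i => (h i i k) ^ 2)]
      refine Finset.sum_congr rfl fun i _ => ?_
      rw [Finset.sum_comm]
      simp
    have e2 : (∑ i, ∑ j, ∑ k, if j = k then (if i ≠ j then (h j j i) ^ 2 else 0) else 0)
        = ∑ i, ∑ k, if i ≠ k then (h i i k) ^ 2 else 0 := by
      rw [Finset.sum_comm]
      refine Finset.sum_congr rfl fun i _ => Finset.sum_congr rfl fun k _ => ?_
      rw [Finset.sum_ite_eq]
      simp [eq_comm]
    have e3 : (∑ i, ∑ j, ∑ k, if i = k then (if i ≠ j then (h i i j) ^ 2 else 0) else 0)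
        = ∑ i, ∑ k, if i ≠ k then (h i i k) ^ 2 else 0 := by
      refine Finset.sum_congr rfl fun i _ => Finset.sum_congr rfl fun k _ => ?_
      rw [Finset.sum_ite_eq]
      simp
    have e4 := Finset.sum_congr rfl fun i (_ : i ∈ (univ : Finset (Fin n))) =>
      Finset.sum_congr rfl fun j (_ : j ∈ (univ : Finset (Fin n))) =>
      Finset.sum_congr rfl fun k (_ : k ∈ (univ : Finset (Fin n))) => pt i j k
    rw [e4]
    simp only [Finset.sum_add_distrib]
    rw [e1, e2, e3]
    ring
  have cs : (1 / (n : ℝ)) * ∑ k, (∑ i, h i i k) ^ 2 ≤ ∑ k, ∑ i, (h i i k) ^ 2 := by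
    have hn0 : (0 : ℝ) < n := by exact_mod_cast hn
    rw [Finset.mul_sum]
    refine Finset.sum_le_sum fun k _ => ?_
    have := sq_sum_le_card_mul_sum_sq (s := (univ : Finset (Fin n))) (f := fun i => h i i k)
    rw [Finset.card_univ, Fintype.card_fin] at this
    rw [one_div, inv_mul_le_iff₀ hn0]
    exact this
  refine ⟨by linarith, ?_⟩
  have p1 : 0 ≤ ∑ i, ∑ k, if i ≠ k then (h i i k) ^ 2 else 0 :=
    Finset.sum_nonneg fun i _ => Finset.sum_nonneg fun k _ => by split_ifs <;> positivity
  have p2 : 0 ≤ ∑ i, ∑ j, ∑ k, if i ≠ j ∧ j ≠ k ∧ i ≠ k then (h i j k) ^ 2 else 0 :=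
    Finset.sum_nonneg fun i _ => Finset.sum_nonneg fun j _ => Finset.sum_nonneg fun k _ => by
      split_ifs <;> positivity
  linarith
end

section
/- Let n ≥ 1 and let u, v : ℝⁿ → ℝ be C² functions such that ∫_{ℝⁿ} (|u(x)|·‖∇v(x)‖ + ‖∇u(x)‖·‖∇v(x)‖ + |u(x)·(Δv(x) − ⟨x, ∇v(x)⟩)|) e^{−‖x‖²/2} dx < ∞. Then ∫_{ℝⁿ} u(x)·(Δv(x) − ⟨x, ∇v(x)⟩) e^{−‖x‖²/2} dx = −∫_{ℝⁿ} ⟨∇u(x), ∇v(x)⟩ e^{−‖x‖²/2} dx. -/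
open MeasureTheory
open scoped RealInnerProductSpace

/-- The Euclidean Laplacian of `f : ℝⁿ → ℝ` at `x`: the trace of the Hessian,
`Δf(x) = ∑ᵢ ∂²f/∂xᵢ²(x)`. -/
noncomputable def euclLaplacian {n : ℕ} (f : EuclideanSpace ℝ (Fin n) → ℝ)
    (x : EuclideanSpace ℝ (Fin n)) : ℝ :=
  ∑ i : Fin n,
    fderiv ℝ (fun y => fderiv ℝ f y (EuclideanSpace.single i 1)) x (EuclideanSpace.single i 1)

open Filter Topology

/-- Divergence theorem on the whole space for integrable fields with integrable divergence. -/
theorem integral_div_eq_zero {n : ℕ} (W : Fin n → EuclideanSpace ℝ (Fin n) → ℝ)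
    (hW : ∀ i, ContDiff ℝ 1 (W i)) (hWi : ∀ i, Integrable (W i))
    (hD : Integrable (fun x => ∑ i, fderiv ℝ (W i) x (EuclideanSpace.single i 1))) :
    ∫ x, ∑ i, fderiv ℝ (W i) x (EuclideanSpace.single i 1) = 0 := by
  let φ : ContDiffBump (0 : EuclideanSpace ℝ (Fin n)) := ⟨1, 2, one_pos, one_lt_two⟩
  have hφ : ContDiff ℝ 1 (φ : EuclideanSpace ℝ (Fin n) → ℝ) := φ.contDiff
  have hφd : Differentiable ℝ (φ : EuclideanSpace ℝ (Fin n) → ℝ) := hφ.differentiable one_ne_zero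
  have hφc : HasCompactSupport (φ : EuclideanSpace ℝ (Fin n) → ℝ) := φ.hasCompactSupport
  obtain ⟨C, hC⟩ := (hφc.fderiv (𝕜 := ℝ)).exists_bound_of_continuous
    (hφ.continuous_fderiv one_ne_zero)
  let c : ℕ → ℝ := fun k => 1 / ((k : ℝ) + 1)
  have hc0 : ∀ k, 0 < c k := fun k => by positivity
  have hc1 : ∀ k, c k ≤ 1 := fun k => by
    have : (0 : ℝ) ≤ k := by positivity
    exact (div_le_one (by positivity)).2 (by linarith)
  have hct : Tendsto c atTop (𝓝 0) := tendsto_one_div_add_atTop_nhds_zero_nat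
  let ψ : ℕ → EuclideanSpace ℝ (Fin n) → ℝ := fun k x => φ (c k • x)
  have hψ : ∀ k, ContDiff ℝ 1 (ψ k) := fun k => hφ.comp (contDiff_const_smul (c k))
  have hψc : ∀ k, HasCompactSupport (ψ k) := fun k => hφc.comp_smul (hc0 k).ne'
  have hψd : ∀ k x e, fderiv ℝ (ψ k) x e = c k * fderiv ℝ φ (c k • x) e := fun k x e => by
    have h1 : HasFDerivAt (ψ k) _ x :=
      (hφd (c k • x)).hasFDerivAt.comp x ((hasFDerivAt_id x).const_smul (c k))
    rw [h1.fderiv]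
    simp
  have hdc : ∀ i e, Continuous fun x => fderiv ℝ (W i) x e := fun i e =>
    ((hW i).continuous_fderiv one_ne_zero).clm_apply continuous_const
  have hψdc : ∀ k e, Continuous fun x => fderiv ℝ (ψ k) x e := fun i e =>
    ((hψ i).continuous_fderiv one_ne_zero).clm_apply continuous_const
  have key : ∀ k, ∫ x, ψ k x * ∑ i, fderiv ℝ (W i) x (EuclideanSpace.single i 1)
      = - ∫ x, ∑ i, fderiv ℝ (ψ k) x (EuclideanSpace.single i 1) * W i x := fun k => by
    have I1 : ∀ i, Integrable fun x => ψ k x * fderiv ℝ (W i) x (EuclideanSpace.single i 1) :=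
      fun i => ((hψ k).continuous.mul (hdc i _)).integrable_of_hasCompactSupport
        ((hψc k).mul_right)
    have I2 : ∀ i, Integrable fun x => fderiv ℝ (ψ k) x (EuclideanSpace.single i 1) * W i x :=
      fun i => ((hψdc k _).mul (hW i).continuous).integrable_of_hasCompactSupport
        (((hψc k).fderiv_apply (𝕜 := ℝ) _).mul_right)
    have I3 : ∀ i, Integrable fun x => ψ k x * W i x :=
      fun i => ((hψ k).continuous.mul (hW i).continuous).integrable_of_hasCompactSupport
        ((hψc k).mul_right)
    simp_rw [Finset.mul_sum]
    rw [integral_finsetSum _ (fun i _ => I1 i), integral_finsetSum _ (fun i _ => I2 i),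
      ← Finset.sum_neg_distrib]
    refine Finset.sum_congr rfl fun i _ => ?_
    exact integral_mul_fderiv_eq_neg_fderiv_mul_of_integrable (I2 i) (I1 i) (I3 i)
      (fun x _ => (hψ k).differentiable one_ne_zero x)
      (fun x _ => (hW i).differentiable one_ne_zero x)
  have L1 : Tendsto (fun k => ∫ x, ψ k x * ∑ i, fderiv ℝ (W i) x (EuclideanSpace.single i 1))
      atTop (𝓝 (∫ x, ∑ i, fderiv ℝ (W i) x (EuclideanSpace.single i 1))) := by
    refine tendsto_integral_of_dominated_convergence
      (fun x => ‖∑ i, fderiv ℝ (W i) x (EuclideanSpace.single i 1)‖) ?_ hD.norm ?_ ?_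
    · exact fun k => ((hψ k).continuous.aestronglyMeasurable).mul hD.1
    · refine fun k => Eventually.of_forall fun x => ?_
      rw [norm_mul]
      refine mul_le_of_le_one_left (norm_nonneg _) ?_
      rw [Real.norm_of_nonneg φ.nonneg]
      exact φ.le_one
    · refine Eventually.of_forall fun x => ?_
      have h0 : Tendsto (fun k => ψ k x) atTop (𝓝 1) := by
        have h1 : Tendsto (fun k => c k • x) atTop (𝓝 0) := by
          simpa using hct.smul_const x
        have h2 := (hφ.continuous.tendsto 0).comp h1
        rwa [φ.one_of_mem_closedBall (by simp [φ])] at h2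
      simpa using h0.mul_const (∑ i, fderiv ℝ (W i) x (EuclideanSpace.single i 1))
  have L2 : Tendsto (fun k => ∫ x, ∑ i, fderiv ℝ (ψ k) x (EuclideanSpace.single i 1) * W i x)
      atTop (𝓝 (∫ x : EuclideanSpace ℝ (Fin n), (0 : ℝ))) := by
    have hb : ∀ k x, ‖∑ i, fderiv ℝ (ψ k) x (EuclideanSpace.single i 1) * W i x‖
        ≤ c k * ∑ i, C * ‖W i x‖ := fun k x => by
      refine (norm_sum_le _ _).trans ?_
      rw [Finset.mul_sum]
      refine Finset.sum_le_sum fun i _ => ?_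
      rw [norm_mul, hψd, norm_mul, Real.norm_of_nonneg (hc0 k).le, mul_assoc]
      have : ‖fderiv ℝ φ (c k • x) (EuclideanSpace.single i 1)‖ ≤ C := by
        refine (ContinuousLinearMap.le_opNorm _ _).trans ?_
        simpa using hC (c k • x)
      have := hc0 k
      gcongr
    have hC0 : 0 ≤ C := (norm_nonneg _).trans (hC 0)
    refine tendsto_integral_of_dominated_convergence (fun x => ∑ i, C * ‖W i x‖) ?_ ?_ ?_ ?_
    · exact fun k => (continuous_finsetSum _ fun i _ =>
        (hψdc k _).mul (hW i).continuous).aestronglyMeasurable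
    · exact integrable_finsetSum _ fun i _ => (hWi i).norm.const_mul C
    · refine fun k => Eventually.of_forall fun x => (hb k x).trans ?_
      exact mul_le_of_le_one_left (by positivity) (hc1 k)
    · refine Eventually.of_forall fun x => ?_
      refine squeeze_zero_norm (hb · x) ?_
      simpa using hct.mul_const (∑ i, C * ‖W i x‖)
  simp_rw [key] at L1
  have := tendsto_nhds_unique L1 L2.neg
  simpa using this

/-- Colding–Minicozzi weighted integration by parts on `ℝⁿ` (a `λ`-hypersurface with
`λ = 0`): if `u, v` are `C²` and
`∫ (|u|‖∇v‖ + ‖∇u‖‖∇v‖ + |u·(Δv − ⟨x,∇v⟩)|) e^{−‖x‖²/2} dx < ∞`, then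
`∫ u·(Δv − ⟨x,∇v⟩) e^{−‖x‖²/2} dx = −∫ ⟨∇u,∇v⟩ e^{−‖x‖²/2} dx`. -/
theorem gaussian_integration_by_parts (n : ℕ) (hn : 1 ≤ n)
    (u v : EuclideanSpace ℝ (Fin n) → ℝ)
    (hu : ContDiff ℝ 2 u) (hv : ContDiff ℝ 2 v)
    (hint : Integrable (fun x =>
      (|u x| * ‖gradient v x‖ + ‖gradient u x‖ * ‖gradient v x‖
        + |u x * (euclLaplacian v x - ⟪x, gradient v x⟫)|) * Real.exp (-‖x‖ ^ 2 / 2))) :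
    ∫ x, u x * (euclLaplacian v x - ⟪x, gradient v x⟫) * Real.exp (-‖x‖ ^ 2 / 2)
      = -∫ x, ⟪gradient u x, gradient v x⟫ * Real.exp (-‖x‖ ^ 2 / 2) := by
  let g : EuclideanSpace ℝ (Fin n) → ℝ := fun x => Real.exp (-‖x‖ ^ 2 / 2)
  have hg : ContDiff ℝ 2 g := ((contDiff_norm_sq ℝ).neg.div_const 2).exp
  have hgd : ∀ x e, fderiv ℝ g x e = - ⟪x, e⟫ * g x := fun x e => by
    have h1 := ((hasStrictFDerivAt_norm_sq x).hasFDerivAt.neg.mul_const (1 / 2 : ℝ)).exp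
    have h2 : g = fun x => Real.exp (-‖x‖ ^ 2 * (1 / 2)) := by
      funext y; simp only [g]; congr 1; ring
    have h3 : HasFDerivAt (fun x : EuclideanSpace ℝ (Fin n) => Real.exp (-‖x‖ ^ 2 * (1 / 2))) _ x := h1
    rw [h2]
    rw [h3.fderiv]
    simp
    ring
  have hdv : ∀ e, ContDiff ℝ 1 fun y => fderiv ℝ v y e := fun e =>
    (hv.fderiv_right (m := 1) (by norm_num)).clm_apply contDiff_const
  have hdu : ∀ e, ContDiff ℝ 1 fun y => fderiv ℝ u y e := fun e =>
    (hu.fderiv_right (m := 1) (by norm_num)).clm_apply contDiff_const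
  have hu1 : ContDiff ℝ 1 u := hu.of_le (by norm_num)
  have hg1 : ContDiff ℝ 1 g := hg.of_le (by norm_num)
  have hgv : Continuous (gradient v) :=
    (InnerProductSpace.toDual ℝ _).symm.continuous.comp (hv.continuous_fderiv (by norm_num))
  have hgu : Continuous (gradient u) :=
    (InnerProductSpace.toDual ℝ _).symm.continuous.comp (hu.continuous_fderiv (by norm_num))
  have hlap : Continuous (euclLaplacian v) := by
    unfold euclLaplacian
    exact continuous_finsetSum _ fun i _ =>
      ((hdv _).continuous_fderiv one_ne_zero).clm_apply continuous_const
  have hL : Integrable fun x =>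
      u x * (euclLaplacian v x - ⟪x, gradient v x⟫) * Real.exp (-‖x‖ ^ 2 / 2) := by
    refine hint.mono' (((hu.continuous.mul (hlap.sub (continuous_id.inner hgv))).mul
      hg.continuous).aestronglyMeasurable) (Eventually.of_forall fun x => ?_)
    rw [norm_mul, Real.norm_of_nonneg (Real.exp_pos _).le, Real.norm_eq_abs]
    gcongr
    exact le_add_of_nonneg_left (by positivity)
  have hG : Integrable fun x =>
      ⟪gradient u x, gradient v x⟫ * Real.exp (-‖x‖ ^ 2 / 2) := by
    refine hint.mono' (((hgu.inner hgv).mul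
      hg.continuous).aestronglyMeasurable) (Eventually.of_forall fun x => ?_)
    rw [norm_mul, Real.norm_of_nonneg (Real.exp_pos _).le]
    gcongr
    have h1 := norm_inner_le_norm (𝕜 := ℝ) (gradient u x) (gradient v x)
    have h2 : 0 ≤ |u x| * ‖gradient v x‖ := by positivity
    have h3 := abs_nonneg (u x * (euclLaplacian v x - ⟪x, gradient v x⟫))
    linarith
  let W : Fin n → EuclideanSpace ℝ (Fin n) → ℝ := fun i x =>
    u x * fderiv ℝ v x (EuclideanSpace.single i 1) * g x
  have hW : ∀ i, ContDiff ℝ 1 (W i) := fun i => (hu1.mul (hdv _)).mul hg1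
  have hWi : ∀ i, Integrable (W i) := fun i => by
    refine hint.mono' (hW i).continuous.aestronglyMeasurable (Eventually.of_forall fun x => ?_)
    simp only [W, g]
    rw [norm_mul, Real.norm_of_nonneg (Real.exp_pos _).le, norm_mul, Real.norm_eq_abs]
    gcongr
    have h1 : ‖fderiv ℝ v x (EuclideanSpace.single i 1)‖ ≤ ‖gradient v x‖ := by
      rw [← inner_gradient_left]
      simpa using norm_inner_le_norm (𝕜 := ℝ) (gradient v x) (EuclideanSpace.single i (1 : ℝ))
    have h2 : 0 ≤ ‖gradient u x‖ * ‖gradient v x‖ := by positivity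
    have h3 := abs_nonneg (u x * (euclLaplacian v x - ⟪x, gradient v x⟫))
    have h4 := mul_le_mul_of_nonneg_left h1 (abs_nonneg (u x))
    linarith
  have hdiv : ∀ x, ∑ i, fderiv ℝ (W i) x (EuclideanSpace.single i 1)
      = u x * (euclLaplacian v x - ⟪x, gradient v x⟫) * Real.exp (-‖x‖ ^ 2 / 2)
        + ⟪gradient u x, gradient v x⟫ * Real.exp (-‖x‖ ^ 2 / 2) := fun x => by
    have hi : ∀ i, fderiv ℝ (W i) x (EuclideanSpace.single i 1)
        = u x * fderiv ℝ (fun y => fderiv ℝ v y (EuclideanSpace.single i 1)) x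
            (EuclideanSpace.single i 1) * g x
          - u x * (⟪x, EuclideanSpace.single i 1⟫ * ⟪EuclideanSpace.single i 1, gradient v x⟫) * g x
          + ⟪gradient u x, EuclideanSpace.single i 1⟫ * ⟪EuclideanSpace.single i 1, gradient v x⟫
            * g x := fun i => by
      have h1 : HasFDerivAt (W i) _ x :=
        (((hu1.differentiable one_ne_zero x).hasFDerivAt.mul
        ((hdv (EuclideanSpace.single i 1)).differentiable one_ne_zero x).hasFDerivAt).mul
        (hg1.differentiable one_ne_zero x).hasFDerivAt)
      rw [h1.fderiv]
      rw [inner_gradient_left, real_inner_comm (gradient v x), inner_gradient_left]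
      simp only [ContinuousLinearMap.add_apply, ContinuousLinearMap.smul_apply, smul_eq_mul,
        Pi.mul_apply, hgd]
      ring
    have hs : ∀ a b : EuclideanSpace ℝ (Fin n),
        ∑ i, ⟪a, EuclideanSpace.single i 1⟫ * ⟪EuclideanSpace.single i 1, b⟫ = ⟪a, b⟫ :=
      fun a b => by
        simpa using (EuclideanSpace.basisFun (Fin n) ℝ).sum_inner_mul_inner a b
    simp_rw [hi]
    rw [Finset.sum_add_distrib, Finset.sum_sub_distrib]
    simp_rw [← Finset.sum_mul, ← Finset.mul_sum]
    rw [hs, hs]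
    simp only [euclLaplacian, g]
    ring
  have h0 := integral_div_eq_zero W hW hWi (by simp_rw [hdiv]; exact hL.add hG)
  simp_rw [hdiv] at h0
  rw [integral_add hL hG] at h0
  linarith
end

section
/- Let n ≥ 1 and let f : ℝⁿ → ℝ be a C² function that is bounded from above. Then there exists a sequence of points (x_k) in ℝⁿ such that f(x_k) → sup f, ‖∇f(x_k)‖ → 0, and limsup_{k→∞} (Δf(x_k) − ⟨x_k, ∇f(x_k)⟩) ≤ 0. -/
open Filter
open scoped RealInnerProductSpace Topology

/-- The penalized maximum: first and second order information at a maximum of `f - ε‖·‖²`. -/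
lemma exists_pen_max {n : ℕ} (f : EuclideanSpace ℝ (Fin n) → ℝ) (hf : Continuous f)
    (hbdd : BddAbove (Set.range f)) (ε : ℝ) (hε : 0 < ε) :
    ∃ x, ∀ y, f y - ε * ‖y‖ ^ 2 ≤ f x - ε * ‖x‖ ^ 2 := by
  obtain ⟨M, hM⟩ := hbdd
  have hM' : ∀ y, f y ≤ M := fun y => hM ⟨y, rfl⟩
  have hc : Continuous (fun y => f y - ε * ‖y‖ ^ 2) := by fun_prop
  refine hc.exists_forall_ge ?_
  have h1 : Tendsto (fun y : EuclideanSpace ℝ (Fin n) => ε * ‖y‖ ^ 2)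
      (cocompact _) atTop :=
    Tendsto.const_mul_atTop hε
      ((tendsto_pow_atTop two_ne_zero).comp (tendsto_norm_cocompact_atTop))
  have h2 : Tendsto (fun y : EuclideanSpace ℝ (Fin n) => M + - (ε * ‖y‖ ^ 2))
      (cocompact _) atBot :=
    tendsto_atBot_add_const_left _ M (tendsto_neg_atTop_atBot.comp h1)
  exact tendsto_atBot_mono (fun y => by linarith [hM' y]) h2

lemma fderiv_pen_max {n : ℕ} (f : EuclideanSpace ℝ (Fin n) → ℝ) (hf : ContDiff ℝ 2 f)
    (ε : ℝ) (x : EuclideanSpace ℝ (Fin n))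
    (hx : ∀ y, f y - ε * ‖y‖ ^ 2 ≤ f x - ε * ‖x‖ ^ 2) (v : EuclideanSpace ℝ (Fin n)) :
    fderiv ℝ f x v = 2 * ε * ⟪x, v⟫ := by
  have hd : DifferentiableAt ℝ f x := (hf.differentiable two_ne_zero) x
  have h1 := hd.hasFDerivAt.sub ((hasStrictFDerivAt_norm_sq x).hasFDerivAt.const_mul ε)
  have hm : IsLocalMax (fun y => f y - ε * ‖y‖ ^ 2) x := Eventually.of_forall hx
  have h2 := hm.hasFDerivAt_eq_zero h1
  have h3 := congrArg (fun L => L v) h2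
  simp at h3
  linarith

lemma second_pen_max {n : ℕ} (f : EuclideanSpace ℝ (Fin n) → ℝ) (hf : ContDiff ℝ 2 f)
    (ε : ℝ) (x : EuclideanSpace ℝ (Fin n))
    (hx : ∀ y, f y - ε * ‖y‖ ^ 2 ≤ f x - ε * ‖x‖ ^ 2) (v : EuclideanSpace ℝ (Fin n))
    (hv : ‖v‖ = 1) :
    fderiv ℝ (fun y => fderiv ℝ f y v) x v ≤ 2 * ε := by
  by_contra! hlt
  set D := fderiv ℝ (fun y => fderiv ℝ f y v) x v with hD
  obtain ⟨δ, h1, h2⟩ : ∃ δ, ε < δ ∧ 2 * δ < D := ⟨(ε + D / 2) / 2, by linarith, by linarith⟩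
  have hfd : Differentiable ℝ f := hf.differentiable two_ne_zero
  have hf1 : ContDiff ℝ 1 (fun y => fderiv ℝ f y v) :=
    (hf.fderiv_right (m := 1) (by norm_num)).clm_apply contDiff_const
  have hfd1 : Differentiable ℝ (fun y => fderiv ℝ f y v) := hf1.differentiable one_ne_zero
  have hline : ∀ t : ℝ, HasDerivAt (fun t : ℝ => x + t • v) v t := fun t => by
    simpa using ((hasDerivAt_id t).smul_const v).const_add x
  set c := 2 * ε * ⟪x, v⟫ with hc
  set h : ℝ → ℝ := fun t => f (x + t • v) - δ * t ^ 2 - c * t with hh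
  have hh1 : ∀ t, HasDerivAt h (fderiv ℝ f (x + t • v) v - δ * (2 * t) - c) t := fun t => by
    have a := (hfd (x + t • v)).hasFDerivAt.comp_hasDerivAt t (hline t)
    have b := ((hasDerivAt_pow 2 t).const_mul δ)
    have e := (hasDerivAt_id t).const_mul c
    have := (a.sub b).sub e
    refine HasDerivAt.congr_deriv (f := h) this ?_
    simp
  have hdh : deriv h = fun t => fderiv ℝ f (x + t • v) v - δ * (2 * t) - c :=
    funext fun t => (hh1 t).deriv
  have hh2 : HasDerivAt (fun t : ℝ => fderiv ℝ f (x + t • v) v - δ * (2 * t) - c)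
      (D - 2 * δ) 0 := by
    have a := (hfd1 (x + (0:ℝ) • v)).hasFDerivAt.comp_hasDerivAt 0 (hline 0)
    have b := (((hasDerivAt_id (0:ℝ)).const_mul 2).const_mul δ)
    have := (a.sub b).sub_const c
    refine HasDerivAt.congr_deriv this ?_
    simp [hD]; ring
  have hmin : IsLocalMin h 0 := by
    apply isLocalMin_of_deriv_deriv_pos
    · rw [hdh, hh2.deriv]; linarith
    · rw [hdh]; simp [fderiv_pen_max f hf ε x hx v, hc]
    · exact (hh1 0).continuousAt
  have hne : ∀ᶠ t in 𝓝[≠] (0:ℝ), h 0 ≤ h t ∧ t ≠ 0 :=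
    (hmin.filter_mono nhdsWithin_le_nhds).and self_mem_nhdsWithin
  obtain ⟨t, ht, ht0⟩ := hne.exists
  have key := hx (x + t • v)
  rw [norm_add_sq_real, norm_smul, inner_smul_right, hv] at key
  simp [hh] at ht
  have : 0 < t ^ 2 := by positivity
  have ht2 : |t| ^ 2 = t ^ 2 := sq_abs t
  simp only [Real.norm_eq_abs, mul_one, ht2] at key
  nlinarith

lemma limsup_le_of_bound (u e : ℕ → ℝ) (hu : ∀ k, u k ≤ e k) (he : Tendsto e atTop (𝓝 0)) :
    limsup u atTop ≤ 0 := by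
  rw [limsup_eq]
  by_cases hb : BddBelow {a | ∀ᶠ n in atTop, u n ≤ a}
  · refine le_of_forall_pos_le_add fun δ hδ => ?_
    rw [zero_add]
    refine csInf_le hb ?_
    filter_upwards [he.eventually_le_const hδ] with k hk using (hu k).trans hk
  · rw [Real.sInf_of_not_bddBelow hb]

/-- Generalized maximum principle for the drift operator `ℒf = Δf − ⟨x, ∇f⟩` on `ℝⁿ`
(a flat `λ`-hypersurface with `λ = 0`): if `f` is `C²` and bounded above, there is a
sequence `(x_k)` with `f(x_k) → sup f`, `‖∇f(x_k)‖ → 0`, and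
`limsup_k (Δf(x_k) − ⟨x_k, ∇f(x_k)⟩) ≤ 0`. -/
theorem generalized_maximum_principle (n : ℕ) (hn : 1 ≤ n)
    (f : EuclideanSpace ℝ (Fin n) → ℝ) (hf : ContDiff ℝ 2 f)
    (hbdd : BddAbove (Set.range f)) :
    ∃ x : ℕ → EuclideanSpace ℝ (Fin n),
      Tendsto (fun k => f (x k)) atTop (𝓝 (⨆ y, f y)) ∧
      Tendsto (fun k => ‖gradient f (x k)‖) atTop (𝓝 0) ∧
      limsup (fun k => euclLaplacian f (x k) - ⟪x k, gradient f (x k)⟫) atTop ≤ 0 := by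
  set ε : ℕ → ℝ := fun k => 1 / ((k : ℝ) + 1) with hεdef
  have hε : ∀ k, 0 < ε k := fun k => by simp only [hεdef]; positivity
  have hε0 : Tendsto ε atTop (𝓝 0) := tendsto_one_div_add_atTop_nhds_zero_nat
  choose x hx using fun k => exists_pen_max f hf.continuous hbdd (ε k) (hε k)
  have hgrad : ∀ k, gradient f (x k) = (2 * ε k) • x k := fun k => by
    refine ext_inner_right ℝ fun v => ?_
    rw [inner_smul_left, gradient, InnerProductSpace.toDual_symm_apply,
      fderiv_pen_max f hf _ _ (hx k)]
    simp
  have hsup : ∀ y, f y ≤ ⨆ y, f y := fun y => le_ciSup hbdd y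
  refine ⟨x, ?_, ?_, ?_⟩
  · refine tendsto_order.2 ⟨fun a ha => ?_, fun a ha => Eventually.of_forall fun k =>
      (hsup _).trans_lt ha⟩
    obtain ⟨y, hy⟩ := exists_lt_of_lt_ciSup ha
    have h1 : Tendsto (fun k => f y - ε k * ‖y‖ ^ 2) atTop (𝓝 (f y)) := by
      simpa using (hε0.mul_const (‖y‖ ^ 2)).const_sub (f y)
    filter_upwards [h1.eventually_const_lt hy] with k hk
    have := hx k y
    have : 0 ≤ ε k * ‖x k‖ ^ 2 := mul_nonneg (hε k).le (sq_nonneg _)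
    linarith
  · have h1 : Tendsto (fun k => √(4 * ε k * ((⨆ y, f y) - f 0))) atTop (𝓝 0) := by
      have : Tendsto (fun k => 4 * ε k * ((⨆ y, f y) - f 0)) atTop (𝓝 0) := by
        simpa using (hε0.const_mul 4).mul_const ((⨆ y, f y) - f 0)
      simpa using this.sqrt
    refine squeeze_zero (fun _ => norm_nonneg _) (fun k => ?_) h1
    apply Real.le_sqrt_of_sq_le
    rw [hgrad, norm_smul, mul_pow, Real.norm_eq_abs, sq_abs]
    have h2 := hx k 0
    have h3 := hsup (x k)
    simp only [norm_zero] at h2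
    have h4 : ε k * ‖x k‖ ^ 2 ≤ (⨆ y, f y) - f 0 := by linarith
    have := mul_le_mul_of_nonneg_left h4 (by linarith [hε k] : 0 ≤ 4 * ε k)
    linarith
  · refine limsup_le_of_bound _ (fun k => n * (2 * ε k)) (fun k => ?_) ?_
    · have h1 : euclLaplacian f (x k) ≤ n * (2 * ε k) := by
        unfold euclLaplacian
        refine (Finset.sum_le_sum fun i _ => second_pen_max f hf _ _ (hx k) _ (by simp)).trans ?_
        simp
      have h2 : 0 ≤ ⟪x k, gradient f (x k)⟫ := by
        rw [hgrad, inner_smul_right, real_inner_self_eq_norm_sq]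
        have := hε k
        positivity
      linarith
    · simpa using (hε0.const_mul 2).const_mul (n : ℝ)
end
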